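/- For every integer n ≥ 2, the best approximation in L¹(𝕋) of the kernel K_1(θ) = B_1(θ)cos θ by trigonometric polynomials of degree ≤ n−1 equals tan(π/(2n)), and the best approximation of K_2(θ) = B_1(θ)sin θ equals sec(π/(2n)) − 1. -/

import Mathlib

noncomputable def Bern (m : ℕ) (θ : ℝ) : ℂ :=
  if m = 1 then
    ((Real.pi - θ + 2 * Real.pi * (⌊θ / (2 * Real.pi)⌋ : ℤ) : ℝ) : ℂ)
  else
    ∑' k : ℤ, if k = 0 then 0 else Complex.exp (k * θ * Complex.I) / (Complex.I * k) ^ m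

/-- Trigonometric polynomials of degree at most `n` (complex coefficients). -/
def trigPoly (n : ℕ) : Set (ℝ → ℂ) :=
  {t | ∃ c : ℤ → ℂ, t = fun θ : ℝ =>
    ∑ k ∈ Finset.Icc (-(n:ℤ)) (n:ℤ), c k * Complex.exp (k * (θ:ℂ) * Complex.I)}

noncomputable def L1norm (f : ℝ → ℂ) : ℝ :=
  (1 / (2 * Real.pi)) * ∫ φ in (0:ℝ)..(2 * Real.pi), ‖f φ‖

/-- Best approximation in `L¹(𝕋)` by trigonometric polynomials of degree at most `n`. -/
noncomputable def bestApprox (n : ℕ) (f : ℝ → ℂ) : ℝ :=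
  sInf ((fun t : ℝ → ℂ => L1norm (fun θ => f θ - t θ)) '' (trigPoly n))

/-! Let `S = sign h`, where `h θ` is `sin (n θ)` for the cosine kernel and `-cos (n θ)` for the sine
kernel. As `S` is antiperiodic with antiperiod `π / n`, it is orthogonal to all trigonometric
polynomials of degree less than `n`. By duality it suffices to find such a polynomial `t` for which
the error is `h` times a nonnegative function; the best approximation is then the mean of the
kernel multiplied by `S`.

To find `t`, write `(π - θ) / 2 = ∫₀¹ sin θ / (1 - 2 r cos θ + r²) dr`. For each `r`, a nonnegative
multiple of `h` is subtracted from the numerator so that the denominator divides the difference, as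
is checked by induction on `n` using the Chebyshev recurrence; the quotients, integrated over `r`,
give `t`.

The integral of `(π - θ) e^{iθ} S θ` over a period is reduced to the integral of `e^{iθ} S θ` over
`[0, π / n]` by translation: `e^{iθ} S θ` is multiplied by `-e^{iπ/n}` when `θ` grows by `π / n`. -/

open MeasureTheory Function
open scoped Real

/-! ### Duality -/

lemma continuous_of_mem_trigPoly {m : ℕ} {t : ℝ → ℂ} (ht : t ∈ trigPoly m) : Continuous t := by
  obtain ⟨c, rfl⟩ := ht
  fun_prop

lemma intervalIntegrable_mul_of_norm_le_one {f σ : ℝ → ℂ} {a b : ℝ}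
    (hf : IntervalIntegrable f volume a b) (hσ : Measurable σ) (hσ_le : ∀ x, ‖σ x‖ ≤ 1) :
    IntervalIntegrable (fun x => f x * σ x) volume a b := by
  rw [intervalIntegrable_iff] at hf ⊢
  exact hf.mul_bdd hσ.aestronglyMeasurable (.of_forall hσ_le)

lemma norm_integral_mul_le_L1norm {f σ : ℝ → ℂ} (hf : IntervalIntegrable f volume 0 (2 * π))
    (hσ : Measurable σ) (hσ_le : ∀ x, ‖σ x‖ ≤ 1) :
    ‖1 / (2 * π) * ∫ x in (0 : ℝ)..2 * π, f x * σ x‖ ≤ L1norm f := by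
  have h_nonneg : (0 : ℝ) ≤ 2 * π := by positivity
  have h_le : ‖∫ x in (0 : ℝ)..2 * π, f x * σ x‖ ≤ ∫ x in (0 : ℝ)..2 * π, ‖f x‖ :=
    (intervalIntegral.norm_integral_le_integral_norm h_nonneg).trans <|
      intervalIntegral.integral_mono_on h_nonneg
        (intervalIntegrable_mul_of_norm_le_one hf hσ hσ_le).norm hf.norm fun x _ => by
          simpa using mul_le_of_le_one_right (norm_nonneg (f x)) (hσ_le x)
  have h_const : ‖(1 / (2 * π) : ℂ)‖ = 1 / (2 * π) := by
    simp [abs_of_pos Real.pi_pos]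
  rw [norm_mul, h_const, L1norm]
  gcongr

lemma ofReal_L1norm_eq_integral_mul {f σ : ℝ → ℂ}
    (hfσ : ∀ x ∈ Set.Ioo 0 (2 * π), f x * σ x = ‖f x‖) :
    (L1norm f : ℂ) = 1 / (2 * π) * ∫ x in (0 : ℝ)..2 * π, f x * σ x := by
  rw [intervalIntegral.integral_congr_Ioo_of_le (by positivity) hfσ,
    intervalIntegral.integral_ofReal, L1norm]
  push_cast
  rfl

lemma ofReal_bestApprox_eq_integral_mul {m : ℕ} {f σ t : ℝ → ℂ}
    (hf : IntervalIntegrable f volume 0 (2 * π)) (hσ : Measurable σ) (hσ_le : ∀ x, ‖σ x‖ ≤ 1)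
    (hσ_orth : ∀ s ∈ trigPoly m, ∫ x in (0 : ℝ)..2 * π, s x * σ x = 0) (ht : t ∈ trigPoly m)
    (ht_sign : ∀ x ∈ Set.Ioo 0 (2 * π), (f x - t x) * σ x = ‖f x - t x‖) :
    (bestApprox m f : ℂ) = 1 / (2 * π) * ∫ x in (0 : ℝ)..2 * π, f x * σ x := by
  have int_trig {s : ℝ → ℂ} (hs : s ∈ trigPoly m) : IntervalIntegrable s volume 0 (2 * π) :=
    (continuous_of_mem_trigPoly hs).intervalIntegrable _ _
  have pairing_sub {s : ℝ → ℂ} (hs : s ∈ trigPoly m) :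
      ∫ x in (0 : ℝ)..2 * π, (f x - s x) * σ x = ∫ x in (0 : ℝ)..2 * π, f x * σ x := by
    simp only [sub_mul]
    rw [intervalIntegral.integral_sub (intervalIntegrable_mul_of_norm_le_one hf hσ hσ_le)
      (intervalIntegrable_mul_of_norm_le_one (int_trig hs) hσ hσ_le), hσ_orth s hs, sub_zero]
  have error_eq : (L1norm (fun x => f x - t x) : ℂ) =
      1 / (2 * π) * ∫ x in (0 : ℝ)..2 * π, f x * σ x := by
    rw [ofReal_L1norm_eq_integral_mul ht_sign, pairing_sub ht]
  have is_least : IsLeast ((fun s : ℝ → ℂ => L1norm (fun θ => f θ - s θ)) '' trigPoly m)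
      (L1norm fun θ => f θ - t θ) := by
    refine ⟨⟨t, ht, rfl⟩, ?_⟩
    rintro _ ⟨s, hs, rfl⟩
    calc L1norm (fun θ => f θ - t θ)
        ≤ ‖(L1norm (fun θ => f θ - t θ) : ℂ)‖ := by
          simpa using le_abs_self (L1norm fun θ => f θ - t θ)
      _ = ‖1 / (2 * π) * ∫ x in (0 : ℝ)..2 * π, (f x - s x) * σ x‖ := by
          rw [error_eq, pairing_sub hs]
      _ ≤ L1norm (fun θ => f θ - s θ) :=
          norm_integral_mul_le_L1norm (hf.sub (int_trig hs)) hσ hσ_le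
  rw [bestApprox, is_least.csInf_eq, error_eq]

/-! ### Integrals of quasiperiodic functions -/

section Quasiperiodic

variable {h : ℝ → ℂ} {L u : ℝ} {ω : ℂ}

lemma integral_eq_zero_of_quasiperiodic (h_per : Periodic h L)
    (h_shift : ∀ x, h (x + u) = ω * h x) (hω : ω ≠ 1) : ∫ x in (0 : ℝ)..L, h x = 0 := by
  have shifted : ω * ∫ x in (0 : ℝ)..L, h x = ∫ x in (0 : ℝ)..L, h x := by
    calc ω * ∫ x in (0 : ℝ)..L, h x = ∫ x in (0 : ℝ)..L, h (x + u) := by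
          simp only [h_shift, intervalIntegral.integral_const_mul]
      _ = ∫ x in u..u + L, h x := by
          rw [intervalIntegral.integral_comp_add_right, zero_add, add_comm L]
      _ = ∫ x in (0 : ℝ)..L, h x := by
          rw [h_per.intervalIntegral_add_eq u 0, zero_add]
  exact (mul_left_eq_self₀.mp shifted).resolve_left hω

lemma integral_id_mul_add_period (h_int : ∀ a b, IntervalIntegrable h volume a b)
    (h_per : Periodic h L) :
    ∫ x in L..L + u, x * h x = (∫ x in (0 : ℝ)..u, x * h x) + L * ∫ x in (0 : ℝ)..u, h x := by
  calc ∫ x in L..L + u, x * h x = ∫ x in (0 : ℝ)..u, (x + L : ℝ) * h (x + L) := by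
        rw [intervalIntegral.integral_comp_add_right fun x : ℝ => (x : ℂ) * h x, zero_add,
          add_comm u]
    _ = _ := by
        simp only [h_per _, Complex.ofReal_add, add_mul]
        rw [intervalIntegral.integral_add ((h_int _ _).continuousOn_mul (by fun_prop))
          ((h_int _ _).const_mul _), intervalIntegral.integral_const_mul]

lemma integral_const_sub_mul_of_quasiperiodic (h_int : ∀ a b, IntervalIntegrable h volume a b)
    (h_per : Periodic h L) (h_shift : ∀ x, h (x + u) = ω * h x) (hω : ω ≠ 1) (c : ℂ) :
    (1 - ω) * ∫ x in (0 : ℝ)..L, (c - x) * h x = L * ∫ x in (0 : ℝ)..u, h x := by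
  have x_int (a b : ℝ) : IntervalIntegrable (fun x : ℝ => x * h x) volume a b :=
    (h_int a b).continuousOn_mul (by fun_prop)
  have mean_zero := integral_eq_zero_of_quasiperiodic h_per h_shift hω
  have const_sub (d : ℂ) (a b : ℝ) (h0 : ∫ x in a..b, h x = 0) :
      ∫ x in a..b, (d - x) * h x = -∫ x in a..b, x * h x := by
    simp only [sub_mul]
    rw [intervalIntegral.integral_sub ((h_int _ _).const_mul _) (x_int _ _),
      intervalIntegral.integral_const_mul, h0, mul_zero, zero_sub]
  have mean_zero_translate : ∫ x in u..L + u, h x = 0 := by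
    rw [add_comm, h_per.intervalIntegral_add_eq u 0, zero_add, mean_zero]
  have translate : -(ω * ∫ x in (0 : ℝ)..L, x * h x) = -∫ x in u..L + u, x * h x := by
    calc -(ω * ∫ x in (0 : ℝ)..L, x * h x)
        = ∫ x in (0 : ℝ)..L, (u - (x + u : ℝ)) * h (x + u) := by
          rw [← intervalIntegral.integral_const_mul, ← intervalIntegral.integral_neg]
          refine intervalIntegral.integral_congr fun x _ => ?_
          simp only [h_shift]
          push_cast
          ring
      _ = ∫ x in u..L + u, (u - x) * h x := by
          rw [intervalIntegral.integral_comp_add_right fun x : ℝ => ((u : ℂ) - x) * h x, zero_add]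
      _ = -∫ x in u..L + u, x * h x := const_sub u u (L + u) mean_zero_translate
  have split := intervalIntegral.integral_interval_sub_interval_comm
    (x_int u (L + u)) (x_int 0 L) (x_int u 0)
  rw [intervalIntegral.integral_symm 0 u, intervalIntegral.integral_symm L (L + u),
    integral_id_mul_add_period h_int h_per] at split
  rw [const_sub c 0 L mean_zero]
  linear_combination split - translate

end Quasiperiodic

/-! ### Antiperiodic weights -/

section Antiperiodic

variable {n : ℕ} {S : ℝ → ℂ}

lemma periodic_exp_mul_of_antiperiodic (hn : n ≠ 0) (hS : Antiperiodic S (π / n)) (k : ℤ) :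
    Periodic (fun x : ℝ => Complex.exp (k * x * Complex.I) * S x) (2 * π) := by
  have hS_per : Periodic S (2 * π) := by
    have h := hS.nat_even_mul_periodic n
    rwa [show (n : ℝ) * (2 * (π / n)) = 2 * π by field_simp] at h
  refine Periodic.mul (fun x => ?_) hS_per
  rw [Complex.exp_eq_exp_iff_exists_int]
  exact ⟨k, by push_cast; ring⟩

lemma exp_mul_add_of_antiperiodic {u : ℝ} (hS : Antiperiodic S u) (k : ℤ) (x : ℝ) :
    Complex.exp (k * (x + u : ℝ) * Complex.I) * S (x + u) =
      -Complex.exp (k * u * Complex.I) * (Complex.exp (k * x * Complex.I) * S x) := by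
  rw [hS x, Complex.ofReal_add, mul_add, add_mul, Complex.exp_add]
  ring

lemma one_add_exp_two_mul_I (z : ℂ) :
    1 + Complex.exp (2 * z * Complex.I) = 2 * Complex.cos z * Complex.exp (z * Complex.I) := by
  rw [Complex.two_cos, add_mul, ← Complex.exp_add, ← Complex.exp_add]
  ring_nf
  simp [add_comm]

lemma neg_exp_mul_pi_div_ne_one {k : ℤ} (hk : |k| < n) :
    -Complex.exp (k * (π / n : ℝ) * Complex.I) ≠ 1 := by
  have hn : (0 : ℝ) < n := by exact_mod_cast (abs_nonneg k).trans_lt hk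
  obtain ⟨hk_gt, hk_lt⟩ : -(n : ℝ) < k ∧ (k : ℝ) < n := by exact_mod_cast abs_lt.mp hk
  have half_mem : k * (π / n) / 2 ∈ Set.Ioo (-(π / 2)) (π / 2) := by
    rw [mul_div_assoc', div_div, Set.mem_Ioo, lt_div_iff₀ (by positivity),
      div_lt_iff₀ (by positivity)]
    constructor <;> nlinarith [Real.pi_pos]
  have cos_ne : Complex.cos ((k * (π / n) / 2 : ℝ) : ℂ) ≠ 0 := by
    exact_mod_cast (Real.cos_pos_of_mem_Ioo half_mem).ne'
  have factored := one_add_exp_two_mul_I ((k * (π / n) / 2 : ℝ) : ℂ)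
  intro h_one
  refine mul_ne_zero (mul_ne_zero two_ne_zero cos_ne) (Complex.exp_ne_zero _)
    (factored.symm.trans ?_)
  rw [← h_one]
  push_cast
  ring_nf

lemma integral_trigPoly_mul_eq_zero (hn : n ≠ 0) (hS : Antiperiodic S (π / n))
    (hS_int : IntervalIntegrable S volume 0 (2 * π)) {t : ℝ → ℂ} (ht : t ∈ trigPoly (n - 1)) :
    ∫ x in (0 : ℝ)..2 * π, t x * S x = 0 := by
  obtain ⟨c, rfl⟩ := ht
  simp only [Finset.sum_mul, mul_assoc (c _)]
  rw [intervalIntegral.integral_finsetSum fun k _ =>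
    (hS_int.continuousOn_mul (by fun_prop)).const_mul _]
  refine Finset.sum_eq_zero fun k hk => ?_
  have hk_lt : |k| < n := by
    rw [Finset.mem_Icc] at hk
    rw [abs_lt]
    omega
  rw [intervalIntegral.integral_const_mul,
    integral_eq_zero_of_quasiperiodic (periodic_exp_mul_of_antiperiodic hn hS k)
      (exp_mul_add_of_antiperiodic hS k) (neg_exp_mul_pi_div_ne_one hk_lt), mul_zero]

lemma cos_mul_integral_pi_sub_mul_exp_mul (hn : 2 ≤ n) (hS : Antiperiodic S (π / n))
    (hS_int : ∀ a b, IntervalIntegrable S volume a b) :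
    Real.cos (π / (2 * n)) *
        ∫ x in (0 : ℝ)..2 * π, (π - x) * (Complex.exp (x * Complex.I) * S x) =
      π * ∫ x in (0 : ℝ)..π / n, Complex.exp ((x - π / (2 * n) : ℝ) * Complex.I) * S x := by
  set E : ℝ → ℂ := fun x => Complex.exp (x * Complex.I) * S x with hE
  set w : ℝ := π / (2 * n) with hw
  have hu : π / n = 2 * w := by rw [hw]; field_simp
  have E_int (a b : ℝ) : IntervalIntegrable E volume a b :=
    (hS_int a b).continuousOn_mul (by fun_prop)
  have E_per : Periodic E (2 * π) := by
    simpa only [Int.cast_one, one_mul] using periodic_exp_mul_of_antiperiodic (by omega) hS 1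
  have E_shift (x : ℝ) : E (x + π / n) = -Complex.exp ((π / n : ℝ) * Complex.I) * E x := by
    simpa only [Int.cast_one, one_mul] using exp_mul_add_of_antiperiodic hS 1 x
  have multiplier_ne : -Complex.exp ((π / n : ℝ) * Complex.I) ≠ 1 := by
    simpa only [Int.cast_one, one_mul] using
      neg_exp_mul_pi_div_ne_one (n := n) (k := 1) (by rw [abs_one]; exact_mod_cast hn)
  have moment := integral_const_sub_mul_of_quasiperiodic E_int E_per E_shift multiplier_ne π
  have rotated : ∫ x in (0 : ℝ)..π / n, Complex.exp ((x - w : ℝ) * Complex.I) * S x =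
      Complex.exp (-(w * Complex.I)) * ∫ x in (0 : ℝ)..π / n, E x := by
    rw [← intervalIntegral.integral_const_mul]
    refine intervalIntegral.integral_congr fun x _ => ?_
    simp only [hE]
    rw [← mul_assoc, ← Complex.exp_add]
    push_cast
    ring_nf
  have half_angle := one_add_exp_two_mul_I (w : ℂ)
  rw [hu] at moment rotated ⊢
  rw [rotated]
  have exp_neg_mul_exp : Complex.exp (-(w * Complex.I)) * Complex.exp (w * Complex.I) = 1 := by
    rw [← Complex.exp_add, neg_add_cancel, Complex.exp_zero]
  push_cast at moment ⊢
  change Complex.cos w * (∫ x in (0 : ℝ)..2 * π, (π - x) * E x) = _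
  linear_combination Complex.exp (-(w * Complex.I)) / 2 * moment -
    (∫ x in (0 : ℝ)..2 * π, (π - x) * E x) *
      (Complex.exp (-(w * Complex.I)) / 2 * half_angle + Complex.cos w * exp_neg_mul_exp)

end Antiperiodic

lemma cos_mul_integral_pi_sub_mul_clm_exp_mul {n : ℕ} (hn : 2 ≤ n) {S : ℝ → ℝ}
    (hS : Antiperiodic S (π / n)) (hS_int : ∀ a b, IntervalIntegrable S volume a b)
    (Λ : ℂ →L[ℝ] ℝ) :
    Real.cos (π / (2 * n)) *
        ∫ x in (0 : ℝ)..2 * π, (π - x) * Λ (Complex.exp (x * Complex.I)) * S x =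
      π * ∫ x in (0 : ℝ)..π / n,
        Λ (Complex.exp ((x - π / (2 * n) : ℝ) * Complex.I)) * S x := by
  have hS_anti : Antiperiodic (fun x => (S x : ℂ)) (π / n) := fun x => by simp [hS x]
  have hS_int' (a b : ℝ) : IntervalIntegrable (fun x => (S x : ℂ)) volume a b :=
    ⟨(hS_int a b).1.ofReal, (hS_int a b).2.ofReal⟩
  have Λ_mul (z : ℂ) (a : ℝ) : Λ (z * a) = Λ z * a := by
    rw [mul_comm, ← Complex.real_smul, map_smul, smul_eq_mul, mul_comm]
  have Λ_integral {f : ℝ → ℂ} (hf : Continuous f) (a b : ℝ) :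
      Λ (∫ x in a..b, f x * S x) = ∫ x in a..b, Λ (f x) * S x := by
    rw [← Λ.intervalIntegral_comp_comm ((hS_int' a b).continuousOn_mul hf.continuousOn)]
    simp only [Λ_mul]
  have key := congrArg Λ (cos_mul_integral_pi_sub_mul_exp_mul hn hS_anti hS_int')
  simp only [← mul_assoc] at key
  rw [mul_comm, Λ_mul, mul_comm (π : ℂ), Λ_mul, Λ_integral (by fun_prop),
    Λ_integral (by fun_prop)] at key
  have Λ_pi_sub (x : ℝ) : Λ ((π - x) * Complex.exp (x * Complex.I)) =
      (π - x) * Λ (Complex.exp (x * Complex.I)) := by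
    rw [mul_comm, ← Complex.ofReal_sub, Λ_mul, mul_comm]
  simp only [Λ_pi_sub] at key
  linear_combination key

/-! ### Pairing with square waves -/

lemma measurable_real_sign : Measurable Real.sign :=
  Measurable.ite measurableSet_Iio measurable_const <|
    Measurable.ite measurableSet_Ioi measurable_const measurable_const

lemma abs_real_sign_le_one (x : ℝ) : |Real.sign x| ≤ 1 := by
  rcases Real.sign_apply_eq x with h | h | h <;> simp [h]

lemma self_mul_real_sign (x : ℝ) : x * Real.sign x = |x| := by
  rcases lt_trichotomy x 0 with hx | rfl | hx
  · rw [Real.sign_of_neg hx, abs_of_neg hx, mul_neg_one]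
  · simp
  · rw [Real.sign_of_pos hx, abs_of_pos hx, mul_one]

lemma intervalIntegrable_real_sign_comp {h : ℝ → ℝ} (hh : Measurable h) (a b : ℝ) :
    IntervalIntegrable (fun x => Real.sign (h x)) volume a b :=
  (intervalIntegrable_const (c := (1 : ℝ))).mono_fun'
    (measurable_real_sign.comp hh).aestronglyMeasurable
    (.of_forall fun x => abs_real_sign_le_one (h x))

lemma antiperiodic_real_sign_comp {h : ℝ → ℝ} {u : ℝ} (hh : Antiperiodic h u) :
    Antiperiodic (fun x => Real.sign (h x)) u := fun x => by
  simp only [hh x, Real.sign_neg]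

lemma antiperiodic_sin_nat_mul {n : ℕ} (hn : n ≠ 0) :
    Antiperiodic (fun x : ℝ => Real.sin (n * x)) (π / n) := fun x => by
  simp only [mul_add, mul_div_cancel₀ π (Nat.cast_ne_zero.mpr hn : (n : ℝ) ≠ 0), Real.sin_add_pi]

lemma antiperiodic_neg_cos_nat_mul {n : ℕ} (hn : n ≠ 0) :
    Antiperiodic (fun x : ℝ => -Real.cos (n * x)) (π / n) := fun x => by
  simp only [mul_add, mul_div_cancel₀ π (Nat.cast_ne_zero.mpr hn : (n : ℝ) ≠ 0), Real.cos_add_pi]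

lemma integral_mul_real_sign_of_pos {f h : ℝ → ℝ} {a b : ℝ} (hab : a ≤ b)
    (hh : ∀ x ∈ Set.Ioo a b, 0 < h x) :
    ∫ x in a..b, f x * Real.sign (h x) = ∫ x in a..b, f x :=
  intervalIntegral.integral_congr_Ioo_of_le hab fun x hx => by
    simp only [Real.sign_of_pos (hh x hx), mul_one]

lemma integral_mul_real_sign_of_neg {f h : ℝ → ℝ} {a b : ℝ} (hab : a ≤ b)
    (hh : ∀ x ∈ Set.Ioo a b, h x < 0) :
    ∫ x in a..b, f x * Real.sign (h x) = -∫ x in a..b, f x := by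
  rw [← intervalIntegral.integral_neg]
  exact intervalIntegral.integral_congr_Ioo_of_le hab fun x hx => by
    simp only [Real.sign_of_neg (hh x hx), mul_neg_one]

lemma cos_pi_div_two_mul_pos {n : ℕ} (hn : 2 ≤ n) : 0 < Real.cos (π / (2 * n)) := by
  have hn' : (2 : ℝ) ≤ n := by exact_mod_cast hn
  refine Real.cos_pos_of_mem_Ioo ⟨by linarith [Real.pi_pos, show 0 < π / (2 * n) by positivity], ?_⟩
  gcongr
  linarith

lemma integral_pi_sub_mul_cos_mul_sign_sin {n : ℕ} (hn : 2 ≤ n) :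
    ∫ x in (0 : ℝ)..2 * π, (π - x) * Real.cos x * Real.sign (Real.sin (n * x)) =
      2 * π * Real.tan (π / (2 * n)) := by
  have hn_pos : (0 : ℝ) < n := by positivity
  have reduced := cos_mul_integral_pi_sub_mul_clm_exp_mul hn
    (antiperiodic_real_sign_comp (antiperiodic_sin_nat_mul (by omega : n ≠ 0)))
    (intervalIntegrable_real_sign_comp (by fun_prop)) Complex.reCLM
  simp only [Complex.reCLM_apply, Complex.exp_ofReal_mul_I_re] at reduced
  rw [integral_mul_real_sign_of_pos (by positivity) fun x hx =>
      Real.sin_pos_of_pos_of_lt_pi (mul_pos hn_pos hx.1) ((lt_div_iff₀' hn_pos).mp hx.2),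
    intervalIntegral.integral_comp_sub_right, integral_cos, zero_sub, Real.sin_neg,
    show π / n - π / (2 * n) = π / (2 * n) by field_simp; norm_num] at reduced
  rw [Real.tan_eq_sin_div_cos, mul_div_assoc', eq_div_iff (cos_pi_div_two_mul_pos hn).ne']
  linear_combination reduced

lemma integral_pi_sub_mul_sin_mul_sign_neg_cos {n : ℕ} (hn : 2 ≤ n) :
    ∫ x in (0 : ℝ)..2 * π, (π - x) * Real.sin x * Real.sign (-Real.cos (n * x)) =
      2 * π * (1 / Real.cos (π / (2 * n)) - 1) := by
  have hn_pos : (0 : ℝ) < n := by positivity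
  set w : ℝ := π / (2 * n) with hw
  have hw_pos : 0 < w := by positivity
  have hnw : n * w = π / 2 := by rw [hw]; field_simp
  have hu : π / n = 2 * w := by rw [hw]; field_simp
  have sign_int := intervalIntegrable_real_sign_comp (h := fun x => -Real.cos (n * x))
    (by fun_prop)
  have reduced := cos_mul_integral_pi_sub_mul_clm_exp_mul hn
    (antiperiodic_real_sign_comp (antiperiodic_neg_cos_nat_mul (by omega : n ≠ 0)))
    sign_int Complex.imCLM
  simp only [Complex.imCLM_apply, Complex.exp_ofReal_mul_I_im] at reduced
  rw [← hw, hu] at reduced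
  have left_half : ∀ x ∈ Set.Ioo 0 w, -Real.cos (n * x) < 0 := fun x hx =>
    neg_lt_zero.mpr <| Real.cos_pos_of_mem_Ioo
      ⟨by nlinarith [hx.1, Real.pi_pos], by nlinarith [hx.2]⟩
  have right_half : ∀ x ∈ Set.Ioo w (2 * w), 0 < -Real.cos (n * x) := fun x hx =>
    neg_pos.mpr <| Real.cos_neg_of_pi_div_two_lt_of_lt (by nlinarith [hx.1]) (by nlinarith [hx.2])
  rw [← intervalIntegral.integral_add_adjacent_intervals
      ((sign_int 0 w).continuousOn_mul (by fun_prop))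
      ((sign_int w (2 * w)).continuousOn_mul (by fun_prop)),
    integral_mul_real_sign_of_neg hw_pos.le left_half,
    integral_mul_real_sign_of_pos (by linarith) right_half,
    intervalIntegral.integral_comp_sub_right, intervalIntegral.integral_comp_sub_right,
    integral_sin, integral_sin, zero_sub, sub_self, Real.cos_neg, Real.cos_zero,
    show 2 * w - w = w by ring] at reduced
  have cos_ne : Real.cos w ≠ 0 := (cos_pi_div_two_mul_pos hn).ne'
  rw [div_sub_one cos_ne, mul_div_assoc', eq_div_iff cos_ne]
  linear_combination reduced

/-! ### The Poisson denominator -/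

/-- The denominator `|1 - r e^{iθ}|²` of the Poisson kernel. -/
noncomputable def poissonDenom (r θ : ℝ) : ℝ := 1 - 2 * r * Real.cos θ + r ^ 2

lemma poissonDenom_eq_sq_add_sq (r θ : ℝ) :
    poissonDenom r θ = (1 - r * Real.cos θ) ^ 2 + (r * Real.sin θ) ^ 2 := by
  rw [poissonDenom]
  linear_combination -r ^ 2 * Real.sin_sq_add_cos_sq θ

lemma one_sub_mul_cos_pos {r θ : ℝ} (hr : r ∈ Set.Icc 0 1) (hθ : θ ∈ Set.Ioo 0 (2 * π)) :
    0 < 1 - r * Real.cos θ := by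
  have cos_ne : Real.cos θ ≠ 1 := fun h =>
    hθ.1.ne' <| (Real.cos_eq_one_iff_of_lt_of_lt (by linarith [hθ.1, hθ.2]) hθ.2).mp h
  have cos_lt : Real.cos θ < 1 := lt_of_le_of_ne (Real.cos_le_one θ) cos_ne
  rcases le_or_gt (Real.cos θ) 0 with h | h <;> nlinarith [hr.1, hr.2]

lemma poissonDenom_pos {r θ : ℝ} (hr : r ∈ Set.Icc 0 1) (hθ : θ ∈ Set.Ioo 0 (2 * π)) :
    0 < poissonDenom r θ := by
  rw [poissonDenom_eq_sq_add_sq]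
  have := one_sub_mul_cos_pos hr hθ
  positivity

lemma continuousOn_div_poissonDenom {w : ℝ → ℝ} (hw : Continuous w) {θ : ℝ}
    (hθ : θ ∈ Set.Ioo 0 (2 * π)) :
    ContinuousOn (fun r => w r / poissonDenom r θ) (Set.uIcc 0 1) := by
  rw [Set.uIcc_of_le zero_le_one]
  exact hw.continuousOn.div (by unfold poissonDenom; fun_prop) fun r hr =>
    (poissonDenom_pos hr hθ).ne'

lemma sin_div_one_sub_cos (θ : ℝ) :
    Real.sin θ / (1 - Real.cos θ) = Real.tan ((π - θ) / 2) := by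
  obtain ⟨φ, rfl⟩ : ∃ φ, θ = 2 * φ := ⟨θ / 2, by ring⟩
  rw [show (π - 2 * φ) / 2 = π / 2 - φ by ring, Real.tan_pi_div_two_sub, Real.tan_eq_sin_div_cos,
    inv_div, Real.sin_two_mul, Real.cos_two_mul, Real.cos_sq',
    show 1 - (2 * (1 - Real.sin φ ^ 2) - 1) = 2 * Real.sin φ ^ 2 by ring]
  rcases eq_or_ne (Real.sin φ) 0 with h | h
  · simp [h]
  · field_simp

lemma integral_sin_div_poissonDenom {θ : ℝ} (hθ : θ ∈ Set.Ioo 0 (2 * π)) :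
    ∫ r in (0 : ℝ)..1, Real.sin θ / poissonDenom r θ = (π - θ) / 2 := by
  have deriv_arctan : ∀ r ∈ Set.uIcc (0 : ℝ) 1,
      HasDerivAt (fun r => Real.arctan (r * Real.sin θ / (1 - r * Real.cos θ)))
        (Real.sin θ / poissonDenom r θ) r := by
    intro r hr
    rw [Set.uIcc_of_le zero_le_one] at hr
    have h_ne := (one_sub_mul_cos_pos hr hθ).ne'
    have h_num : HasDerivAt (fun r => r * Real.sin θ) (Real.sin θ) r := hasDerivAt_mul_const _
    have h_den : HasDerivAt (fun r => 1 - r * Real.cos θ) (-Real.cos θ) r :=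
      (hasDerivAt_mul_const _).const_sub 1
    refine (h_num.div h_den h_ne).arctan.congr_deriv ?_
    have h_pos := poissonDenom_pos hr hθ
    rw [poissonDenom_eq_sq_add_sq] at h_pos ⊢
    simp only [Pi.div_apply]
    field_simp
    ring
  rw [intervalIntegral.integral_eq_sub_of_hasDerivAt deriv_arctan
    (continuousOn_div_poissonDenom continuous_const hθ).intervalIntegrable]
  simp only [one_mul, zero_mul, zero_div, Real.arctan_zero, sub_zero, sin_div_one_sub_cos]
  exact Real.arctan_tan (by linarith [hθ.2]) (by linarith [hθ.1])


/-! ### Division by the Poisson denominator -/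

/-- A family of real trigonometric polynomials in `θ`, of degree at most `m`, whose coefficients
depend continuously on a real parameter `r`, so that it can be integrated over `r`. -/
def IsContinuousTrigFamily (m : ℕ) (T : ℝ → ℝ → ℝ) : Prop :=
  ∃ c : ℤ → ℝ → ℂ, (∀ k, Continuous (c k)) ∧ ∀ r θ, (T r θ : ℂ) =
    ∑ k ∈ Finset.Icc (-(m : ℤ)) m, c k r * Complex.exp (k * θ * Complex.I)

namespace IsContinuousTrigFamily

variable {m : ℕ} {T U : ℝ → ℝ → ℝ}

lemma mono {m' : ℕ} (hT : IsContinuousTrigFamily m T) (h : m ≤ m') :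
    IsContinuousTrigFamily m' T := by
  obtain ⟨c, c_cont, hc⟩ := hT
  refine ⟨fun k => if k ∈ Finset.Icc (-(m : ℤ)) m then c k else 0, fun k => ?_, fun r θ => ?_⟩
  · dsimp only
    split_ifs
    exacts [c_cont k, continuous_const]
  · have sub : Finset.Icc (-(m : ℤ)) m ⊆ Finset.Icc (-(m' : ℤ)) m' :=
      Finset.Icc_subset_Icc (by omega) (by omega)
    rw [hc, ← Finset.sum_subset sub fun k _ hk => by simp only [if_neg hk, Pi.zero_apply, zero_mul]]
    exact Finset.sum_congr rfl fun k hk => by simp only [if_pos hk]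

lemma add (hT : IsContinuousTrigFamily m T) (hU : IsContinuousTrigFamily m U) :
    IsContinuousTrigFamily m (fun r θ => T r θ + U r θ) := by
  obtain ⟨c, c_cont, hc⟩ := hT
  obtain ⟨d, d_cont, hd⟩ := hU
  refine ⟨fun k r => c k r + d k r, fun k => (c_cont k).add (d_cont k), fun r θ => ?_⟩
  simp only [Complex.ofReal_add, hc, hd, add_mul, Finset.sum_add_distrib]

lemma continuous_mul {a : ℝ → ℝ} (ha : Continuous a) (hT : IsContinuousTrigFamily m T) :
    IsContinuousTrigFamily m (fun r θ => a r * T r θ) := by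
  obtain ⟨c, c_cont, hc⟩ := hT
  refine ⟨fun k r => a r * c k r, fun k => by have := c_cont k; fun_prop, fun r θ => ?_⟩
  simp only [Complex.ofReal_mul, hc, Finset.mul_sum, mul_assoc]

lemma neg (hT : IsContinuousTrigFamily m T) :
    IsContinuousTrigFamily m (fun r θ => -T r θ) := by
  simpa only [neg_one_mul] using hT.continuous_mul (continuous_const (y := (-1 : ℝ)))

lemma sub (hT : IsContinuousTrigFamily m T) (hU : IsContinuousTrigFamily m U) :
    IsContinuousTrigFamily m (fun r θ => T r θ - U r θ) := by
  simpa only [sub_eq_add_neg] using hT.add hU.neg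

lemma of_exp_add_exp {k : ℕ} (hk : k ≤ m) {f : ℝ → ℝ} (a b : ℂ)
    (hf : ∀ θ, (f θ : ℂ) =
      a * Complex.exp (k * θ * Complex.I) + b * Complex.exp (-(k * θ) * Complex.I)) :
    IsContinuousTrigFamily m (fun _ θ => f θ) := by
  refine ⟨fun j _ => (if j = k then a else 0) + if j = -k then b else 0,
    fun j => continuous_const, fun _ θ => ?_⟩
  have hk_mem : (k : ℤ) ∈ Finset.Icc (-(m : ℤ)) m := Finset.mem_Icc.mpr ⟨by omega, by omega⟩
  have hk_neg_mem : -(k : ℤ) ∈ Finset.Icc (-(m : ℤ)) m := Finset.mem_Icc.mpr ⟨by omega, by omega⟩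
  simp only [add_mul, ite_mul, zero_mul, Finset.sum_add_distrib, Finset.sum_ite_eq', hk_mem,
    hk_neg_mem, if_true]
  rw [hf]
  push_cast
  ring_nf

lemma cos {k : ℕ} (hk : k ≤ m) : IsContinuousTrigFamily m (fun _ θ => Real.cos (k * θ)) :=
  of_exp_add_exp hk (1 / 2) (1 / 2) fun θ => by
    push_cast
    rw [Complex.cos]
    ring

lemma sin {k : ℕ} (hk : k ≤ m) : IsContinuousTrigFamily m (fun _ θ => Real.sin (k * θ)) :=
  of_exp_add_exp hk (-Complex.I / 2) (Complex.I / 2) fun θ => by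
    push_cast
    rw [Complex.sin]
    ring

lemma of_continuous {a : ℝ → ℝ} (ha : Continuous a) :
    IsContinuousTrigFamily m (fun r _ => a r) := by
  simpa using (cos (Nat.zero_le m)).continuous_mul ha

lemma continuous (hT : IsContinuousTrigFamily m T) (θ : ℝ) : Continuous fun r => T r θ := by
  obtain ⟨c, c_cont, hc⟩ := hT
  have : Continuous fun r => (T r θ : ℂ) := by
    simp only [hc]
    fun_prop
  exact Complex.continuous_re.comp this

lemma integral_mem_trigPoly (hT : IsContinuousTrigFamily m T) (a b : ℝ) :
    (fun θ => ((∫ r in a..b, T r θ : ℝ) : ℂ)) ∈ trigPoly m := by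
  obtain ⟨c, c_cont, hc⟩ := hT
  refine ⟨fun k => ∫ r in a..b, c k r, funext fun θ => ?_⟩
  rw [← intervalIntegral.integral_ofReal]
  simp only [hc, ← intervalIntegral.integral_mul_const]
  exact intervalIntegral.integral_finsetSum fun k _ =>
    ((c_cont k).mul continuous_const).intervalIntegrable a b

end IsContinuousTrigFamily

/-- `F r θ` is the Poisson denominator times a continuous family of real trigonometric polynomials
of degree at most `m`. -/
def PoissonDvd (m : ℕ) (F : ℝ → ℝ → ℝ) : Prop :=
  ∃ Q, IsContinuousTrigFamily m Q ∧ ∀ r θ, F r θ = poissonDenom r θ * Q r θ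

lemma poissonDvd_of_recurrence {m : ℕ} {g τ : ℕ → ℝ → ℝ} {u w : ℝ → ℝ} (hw : Continuous w)
    (hg : ∀ k r, g (k + 2) r = (1 + r ^ 2) * g (k + 1) r - r ^ 2 * g k r)
    (hτ : ∀ k θ, τ (k + 2) θ = 2 * Real.cos θ * τ (k + 1) θ - τ k θ)
    (hτ_trig : ∀ k, IsContinuousTrigFamily (m + k + 1) fun _ => τ k)
    (h_zero : PoissonDvd m fun r θ => g 0 r * u θ - w r * τ 0 θ)
    (h_one : PoissonDvd (m + 1) fun r θ => g 1 r * u θ - w r * r * τ 1 θ) (k : ℕ) :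
    PoissonDvd (m + k) fun r θ => g k r * u θ - w r * r ^ k * τ k θ := by
  induction k using Nat.twoStepInduction with
  | zero => simpa only [pow_zero, mul_one, add_zero] using h_zero
  | one => simpa only [pow_one] using h_one
  | more k ih₀ ih₁ =>
    obtain ⟨Q₀, hQ₀, h₀⟩ := ih₀
    obtain ⟨Q₁, hQ₁, h₁⟩ := ih₁
    refine ⟨fun r θ => (1 + r ^ 2) * Q₁ r θ + w r * r ^ (k + 1) * τ (k + 1) θ - r ^ 2 * Q₀ r θ,
      (((hQ₁.mono (by omega)).continuous_mul (by fun_prop)).add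
        (((hτ_trig (k + 1)).mono (by omega)).continuous_mul (by fun_prop))).sub
          ((hQ₀.mono (by omega)).continuous_mul (by fun_prop)), fun r θ => ?_⟩
    simp only [poissonDenom] at h₀ h₁ ⊢
    rw [hg, hτ]
    linear_combination (1 + r ^ 2) * h₁ r θ - r ^ 2 * h₀ r θ

lemma cos_add_two_mul (x θ : ℝ) :
    Real.cos (x + 2 * θ) = 2 * Real.cos θ * Real.cos (x + θ) - Real.cos x := by
  have h := Real.cos_add_cos (x + 2 * θ) x
  rw [show (x + 2 * θ + x) / 2 = x + θ by ring, show (x + 2 * θ - x) / 2 = θ by ring] at h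
  linear_combination h

lemma sin_add_two_mul (x θ : ℝ) :
    Real.sin (x + 2 * θ) = 2 * Real.cos θ * Real.sin (x + θ) - Real.sin x := by
  have h := Real.sin_add_sin (x + 2 * θ) x
  rw [show (x + 2 * θ + x) / 2 = x + θ by ring, show (x + 2 * θ - x) / 2 = θ by ring] at h
  linear_combination h

/- The factors of the next two lemmas are found by comparing the two terms at `e^{iθ} = r`, a zero
of the Poisson denominator: there `r ^ k * sin ((k + 2) θ) / sin (2 θ)` is
`(r ^ (2 * (k + 2)) - 1) / (r ^ 4 - 1)`, and `r ^ k * -cos ((k + 2) θ) / (2 * sin θ ^ 2)` is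
`(1 + r ^ (2 * (k + 2))) / (1 - r ^ 2) ^ 2`. -/
lemma poissonDvd_geom_sum_mul_sub_sin (k : ℕ) :
    PoissonDvd (k + 1) fun r θ =>
      (∑ j ∈ Finset.range (k + 2), (r ^ 2) ^ j) * (2 * Real.cos θ * Real.sin θ) -
        (1 + r ^ 2) * r ^ k * Real.sin ((k + 2 : ℕ) * θ) := by
  rw [add_comm k 1]
  refine poissonDvd_of_recurrence (m := 1) (g := fun k r => ∑ j ∈ Finset.range (k + 2), (r ^ 2) ^ j)
    (τ := fun k θ => Real.sin ((k + 2 : ℕ) * θ)) (u := fun θ => 2 * Real.cos θ * Real.sin θ)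
    (w := fun r => 1 + r ^ 2) (by fun_prop) (fun k r => ?_) (fun k θ => ?_)
    (fun k => .sin (by omega)) ?_ ?_ k
  · simp only [Finset.sum_range_succ _ (k + 3), Finset.sum_range_succ _ (k + 2), pow_succ]
    ring
  · convert sin_add_two_mul ((k + 2 : ℕ) * θ) θ using 3 <;> push_cast <;> ring_nf
  · refine ⟨fun _ _ => 0, .of_continuous continuous_const, fun r θ => ?_⟩
    simp only [Finset.sum_range_succ, Finset.sum_range_zero, Nat.zero_add, Nat.cast_ofNat,
      Real.sin_two_mul]
    ring
  · refine ⟨fun r θ => (1 + r ^ 2) * Real.sin ((2 : ℕ) * θ) + r * Real.sin ((1 : ℕ) * θ),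
      ((IsContinuousTrigFamily.sin le_rfl).continuous_mul (by fun_prop)).add
        ((IsContinuousTrigFamily.sin one_le_two).continuous_mul continuous_id), fun r θ => ?_⟩
    simp only [Finset.sum_range_succ, Finset.sum_range_zero, Nat.reduceAdd, Nat.cast_ofNat,
      Nat.cast_one, one_mul, Real.sin_two_mul, Real.sin_three_mul, poissonDenom]
    linear_combination 4 * r * (1 + r ^ 2) * Real.sin θ * Real.sin_sq_add_cos_sq θ

lemma poissonDvd_one_add_pow_mul_sub_neg_cos (k : ℕ) :
    PoissonDvd (k + 1) fun r θ =>
      (1 + (r ^ 2) ^ (k + 2)) * (2 * Real.sin θ * Real.sin θ) -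
        (1 - r ^ 2) ^ 2 * r ^ k * -Real.cos ((k + 2 : ℕ) * θ) := by
  rw [add_comm k 1]
  refine poissonDvd_of_recurrence (m := 1) (g := fun k r => 1 + (r ^ 2) ^ (k + 2))
    (τ := fun k θ => -Real.cos ((k + 2 : ℕ) * θ)) (u := fun θ => 2 * Real.sin θ * Real.sin θ)
    (w := fun r => (1 - r ^ 2) ^ 2) (by fun_prop) (fun k r => by ring) (fun k θ => ?_)
    (fun k => (IsContinuousTrigFamily.cos (by omega)).neg) ?_ ?_ k
  · rw [mul_neg, sub_neg_eq_add, neg_eq_iff_eq_neg, neg_add, neg_neg, ← sub_eq_add_neg]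
    convert cos_add_two_mul ((k + 2 : ℕ) * θ) θ using 3 <;> push_cast <;> ring_nf
  · refine ⟨fun r θ => 1 + r ^ 2 + 2 * r * Real.cos ((1 : ℕ) * θ),
      (IsContinuousTrigFamily.of_continuous (by fun_prop)).add
        ((IsContinuousTrigFamily.cos le_rfl).continuous_mul (by fun_prop)), fun r θ => ?_⟩
    simp only [Nat.zero_add, Nat.cast_ofNat, Nat.cast_one, one_mul, Real.cos_two_mul, poissonDenom]
    linear_combination 2 * (1 + r ^ 4) * Real.sin_sq_add_cos_sq θ
  · refine ⟨fun r θ => 1 + r ^ 4 + r * (1 + r ^ 2) * Real.cos ((1 : ℕ) * θ) -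
        (1 - r ^ 2) ^ 2 * Real.cos ((2 : ℕ) * θ),
      ((IsContinuousTrigFamily.of_continuous (by fun_prop)).add
        ((IsContinuousTrigFamily.cos one_le_two).continuous_mul (by fun_prop))).sub
          ((IsContinuousTrigFamily.cos le_rfl).continuous_mul (by fun_prop)), fun r θ => ?_⟩
    simp only [Nat.reduceAdd, Nat.cast_ofNat, Nat.cast_one, one_mul, Real.cos_two_mul,
      Real.cos_three_mul, poissonDenom]
    linear_combination 2 * (1 + r ^ 6) * Real.sin_sq_add_cos_sq θ

/-! ### The interpolating polynomials -/

lemma exists_trigPoly_pi_sub_mul_sub_eq {m : ℕ} {φ g w h : ℝ → ℝ} (hg : Continuous g)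
    (hg_pos : ∀ r, 0 < g r) (hw_nonneg : ∀ r ∈ Set.Icc (0 : ℝ) 1, 0 ≤ w r)
    (h_dvd : PoissonDvd m fun r θ => g r * (2 * φ θ * Real.sin θ) - w r * h θ) :
    ∃ t : ℝ → ℝ, (fun θ => (t θ : ℂ)) ∈ trigPoly m ∧
      ∀ θ ∈ Set.Ioo 0 (2 * π), ∃ G, 0 ≤ G ∧ (π - θ) * φ θ - t θ = h θ * G := by
  obtain ⟨Q, hQ, hQ_eq⟩ := h_dvd
  have hg_inv : Continuous fun r => (g r)⁻¹ := hg.inv₀ fun r => (hg_pos r).ne'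
  have hQ_div : IsContinuousTrigFamily m fun r θ => (g r)⁻¹ * Q r θ := hQ.continuous_mul hg_inv
  refine ⟨fun θ => ∫ r in (0 : ℝ)..1, (g r)⁻¹ * Q r θ, hQ_div.integral_mem_trigPoly 0 1,
    fun θ hθ => ⟨∫ r in (0 : ℝ)..1, w r * (g r)⁻¹ / poissonDenom r θ, ?_, ?_⟩⟩
  · refine intervalIntegral.integral_nonneg zero_le_one fun r hr => ?_
    have := hw_nonneg r hr
    have := hg_pos r
    have := poissonDenom_pos hr hθ
    positivity
  · have kernel_eq : (π - θ) * φ θ =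
        ∫ r in (0 : ℝ)..1, 2 * φ θ * (Real.sin θ / poissonDenom r θ) := by
      rw [intervalIntegral.integral_const_mul, integral_sin_div_poissonDenom hθ]
      ring
    rw [kernel_eq, ← intervalIntegral.integral_sub
      ((continuousOn_div_poissonDenom continuous_const hθ).intervalIntegrable.const_mul _)
      ((hQ_div.continuous θ).intervalIntegrable _ _), ← intervalIntegral.integral_const_mul]
    refine intervalIntegral.integral_congr fun r hr => ?_
    rw [Set.uIcc_of_le zero_le_one] at hr
    have hg_ne := (hg_pos r).ne'
    have hP_ne := (poissonDenom_pos hr hθ).ne'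
    field_simp
    linear_combination hQ_eq r θ

lemma exists_trigPoly_pi_sub_mul_cos_sub_eq (p : ℕ) :
    ∃ t : ℝ → ℝ, (fun θ => (t θ : ℂ)) ∈ trigPoly (p + 1) ∧ ∀ θ ∈ Set.Ioo 0 (2 * π),
      ∃ G, 0 ≤ G ∧ (π - θ) * Real.cos θ - t θ = Real.sin ((p + 2 : ℕ) * θ) * G :=
  exists_trigPoly_pi_sub_mul_sub_eq (by fun_prop)
    (fun r => geom_sum_pos (sq_nonneg r) (by omega)) (fun r hr => by have := hr.1; positivity)
    (poissonDvd_geom_sum_mul_sub_sin p)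

lemma exists_trigPoly_pi_sub_mul_sin_sub_eq (p : ℕ) :
    ∃ t : ℝ → ℝ, (fun θ => (t θ : ℂ)) ∈ trigPoly (p + 1) ∧ ∀ θ ∈ Set.Ioo 0 (2 * π),
      ∃ G, 0 ≤ G ∧ (π - θ) * Real.sin θ - t θ = -Real.cos ((p + 2 : ℕ) * θ) * G :=
  exists_trigPoly_pi_sub_mul_sub_eq (by fun_prop) (fun r => by positivity)
    (fun r hr => by have := hr.1; positivity) (poissonDvd_one_add_pow_mul_sub_neg_cos p)

/-! ### Best approximation of the kernels -/

lemma bern_one_of_mem_Ioo {θ : ℝ} (hθ : θ ∈ Set.Ioo 0 (2 * π)) : Bern 1 θ = (π - θ : ℝ) := by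
  have h_floor : ⌊θ / (2 * π)⌋ = 0 := Int.floor_eq_zero_iff.mpr
    ⟨by have := hθ.1; positivity, (div_lt_one (by positivity)).mpr hθ.2⟩
  simp [Bern, h_floor]

lemma bestApprox_bern_one_mul {n : ℕ} (hn : n ≠ 0) {φ h t : ℝ → ℝ} (hφ : Continuous φ)
    (hh : Measurable h) (hh_anti : Antiperiodic h (π / n))
    (ht : (fun θ => (t θ : ℂ)) ∈ trigPoly (n - 1))
    (ht_sign : ∀ θ ∈ Set.Ioo 0 (2 * π), ∃ G, 0 ≤ G ∧ (π - θ) * φ θ - t θ = h θ * G) :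
    bestApprox (n - 1) (fun θ => Bern 1 θ * (φ θ : ℂ)) =
      1 / (2 * π) * ∫ x in (0 : ℝ)..2 * π, (π - x) * φ x * Real.sign (h x) := by
  have kernel_eq {x : ℝ} (hx : x ∈ Set.Ioo 0 (2 * π)) :
      Bern 1 x * (φ x : ℂ) = ((π - x) * φ x : ℝ) := by
    rw [bern_one_of_mem_Ioo hx, ← Complex.ofReal_mul]
  have kernel_int : IntervalIntegrable (fun x => Bern 1 x * (φ x : ℂ)) volume 0 (2 * π) := by
    have h_cont : Continuous fun x => (((π - x) * φ x : ℝ) : ℂ) := by fun_prop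
    refine (h_cont.intervalIntegrable 0 (2 * π)).congr_uIoo fun x hx => (kernel_eq ?_).symm
    rwa [Set.uIoo_of_le (by positivity)] at hx
  have sign_anti : Antiperiodic (fun x => (Real.sign (h x) : ℂ)) (π / n) := fun x => by
    simp only [antiperiodic_real_sign_comp hh_anti x, Complex.ofReal_neg]
  have sign_int : IntervalIntegrable (fun x => (Real.sign (h x) : ℂ)) volume 0 (2 * π) :=
    have h_int := intervalIntegrable_real_sign_comp hh 0 (2 * π)
    ⟨h_int.1.ofReal, h_int.2.ofReal⟩
  have error_mul_sign (x : ℝ) (hx : x ∈ Set.Ioo 0 (2 * π)) :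
      (Bern 1 x * (φ x : ℂ) - t x) * (Real.sign (h x) : ℂ) = ‖Bern 1 x * (φ x : ℂ) - t x‖ := by
    obtain ⟨G, hG, h_eq⟩ := ht_sign x hx
    rw [kernel_eq hx, ← Complex.ofReal_sub, Complex.norm_real, h_eq, Real.norm_eq_abs, abs_mul,
      abs_of_nonneg hG, ← self_mul_real_sign]
    push_cast
    ring
  rw [← Complex.ofReal_inj, ofReal_bestApprox_eq_integral_mul kernel_int
    (σ := fun x => (Real.sign (h x) : ℂ))
    (Complex.measurable_ofReal.comp (measurable_real_sign.comp hh))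
    (fun x => by simpa using abs_real_sign_le_one (h x))
    (fun s hs => integral_trigPoly_mul_eq_zero hn sign_anti sign_int hs) ht error_mul_sign,
    intervalIntegral.integral_congr_Ioo_of_le (by positivity) fun x hx => by
      rw [kernel_eq hx, ← Complex.ofReal_mul], intervalIntegral.integral_ofReal]
  push_cast
  rfl

/-- Best `L¹` approximation of the quasi-Bernoulli kernels: for `n ≥ 2`,
`E_{n−1}(B_1 cos θ)_{L¹} = tan(π/(2n))` and `E_{n−1}(B_1 sin θ)_{L¹} = sec(π/(2n)) − 1`. -/
theorem bestApprox_quasiBernoulli (n : ℕ) (hn : 2 ≤ n) :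
    bestApprox (n - 1) (fun θ => Bern 1 θ * (Real.cos θ : ℂ)) =
      Real.tan (Real.pi / (2 * n)) ∧
    bestApprox (n - 1) (fun θ => Bern 1 θ * (Real.sin θ : ℂ)) =
      1 / Real.cos (Real.pi / (2 * n)) - 1 := by
  obtain ⟨p, rfl⟩ := Nat.exists_eq_add_of_le' hn
  have n_ne : p + 2 ≠ 0 := by omega
  have two_pi_ne : 2 * π ≠ 0 := by positivity
  constructor
  · obtain ⟨t, ht, ht_sign⟩ := exists_trigPoly_pi_sub_mul_cos_sub_eq p
    rw [bestApprox_bern_one_mul n_ne Real.continuous_cos (by fun_prop)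
      (antiperiodic_sin_nat_mul n_ne) ht ht_sign, integral_pi_sub_mul_cos_mul_sign_sin hn,
      one_div, inv_mul_cancel_left₀ two_pi_ne]
  · obtain ⟨t, ht, ht_sign⟩ := exists_trigPoly_pi_sub_mul_sin_sub_eq p
    rw [bestApprox_bern_one_mul n_ne Real.continuous_sin (by fun_prop)
      (antiperiodic_neg_cos_nat_mul n_ne) ht ht_sign, integral_pi_sub_mul_sin_mul_sign_neg_cos hn,
      one_div, inv_mul_cancel_left₀ two_pi_ne]
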